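/- arXiv:hep-th/0605167 — 3 statements merged into one kernel-verified Lean document; each statement's English description precedes it below -/
import Mathlib

section
/- Let A be an associative ring and f, g : Fin 2 → A families of elements such that f α * f β = f β * f α for all α, β and f α * g γ = g γ * f α for all α, γ. Define the rank-one field Π α α̇ := f α * g α̇. Then the ε-square of Π vanishes: ∑_{α,β,α̇,β̇} ε α β * ε α̇ β̇ • (Π α α̇ * Π β β̇) = 0, regardless of any (anti)commutation properties among the g's. -/
/-- The 2×2 antisymmetric symbol with values in `ℤ`. -/
def eps : Fin 2 → Fin 2 → ℤ :=
  fun i j => if i = 0 ∧ j = 1 then 1 else if i = 1 ∧ j = 0 then -1 else 0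

/-!
Since `f` commutes with itself and with `g`, the product `(f α * g α̇) * (f β * g β̇)` is
`(f α * f β) * (g α̇ * g β̇)`, which is symmetric in `α` and `β`. The contraction over the dotted
indices keeps this symmetry, whatever coefficients it uses, and contracting a symmetric family
with the alternating `ε α β` gives zero.
-/

/-- A two-index family is alternating when it vanishes on the diagonal and changes sign under
exchange of its indices, so that its contraction with every symmetric family is zero. The diagonal
condition is separate because of 2-torsion, and the sign change is a vanishing sum so that `M` need
not have negation. -/
structure IsAlternating {ι M : Type*} [AddMonoid M] (F : ι → ι → M) : Prop where
  self_eq_zero : ∀ i, F i i = 0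
  add_swap_eq_zero : ∀ i j, F i j + F j i = 0

namespace IsAlternating

variable {ι M : Type*} [AddCommMonoid M]

theorem sum_sum_eq_zero [Fintype ι] {F : ι → ι → M} (hF : IsAlternating F) :
    ∑ i, ∑ j, F i j = 0 := by
  rw [← Fintype.sum_prod_type']
  refine Finset.sum_involution (fun p _ => p.swap) (fun p _ => hF.add_swap_eq_zero p.1 p.2)
    (fun p _ hp hswap => hp ?_) (fun _ _ => Finset.mem_univ _) (fun p _ => p.swap_swap)
  have hdiag : p.2 = p.1 := congrArg Prod.fst hswap
  rw [hdiag, hF.self_eq_zero]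

theorem smul_of_symm {R : Type*} [Semiring R] [Module R M] {ω : ι → ι → R}
    (hω : IsAlternating ω) {S : ι → ι → M} (hS : ∀ i j, S i j = S j i) :
    IsAlternating fun i j => ω i j • S i j where
  self_eq_zero i := by rw [hω.self_eq_zero, zero_smul]
  add_swap_eq_zero i j := by rw [hS j i, ← add_smul, hω.add_swap_eq_zero, zero_smul]

end IsAlternating

theorem isAlternating_eps : IsAlternating eps where
  self_eq_zero := by decide
  add_swap_eq_zero := by decide

theorem mul_mul_mul_swap_of_commute {A : Type*} [Semigroup A] {a b x : A}
    (hab : Commute a b) (hax : Commute a x) (hbx : Commute b x) (y : A) :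
    (a * x) * (b * y) = (b * x) * (a * y) :=
  calc
    (a * x) * (b * y) = (a * b) * (x * y) := hbx.symm.mul_mul_mul_comm a y
    _ = (b * a) * (x * y) := by rw [hab.eq]
    _ = (b * x) * (a * y) := hax.mul_mul_mul_comm b y

theorem bosonic_factor_nilpotency_general {ι κ R A : Type*} [Fintype ι] [Fintype κ] [Semiring R]
    [NonUnitalSemiring A] [Module R A] {ω : ι → ι → R} (hω : IsAlternating ω) (η : κ → κ → R)
    (f : ι → A) (g : κ → A) (hff : ∀ α β, Commute (f α) (f β))
    (hfg : ∀ α γ, Commute (f α) (g γ)) :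
    ∑ α, ∑ β, ∑ ad, ∑ bd, (ω α β * η ad bd) • ((f α * g ad) * (f β * g bd)) = 0 := by
  have hsymm (α β : ι) :
      ∑ ad, ∑ bd, η ad bd • ((f α * g ad) * (f β * g bd)) =
        ∑ ad, ∑ bd, η ad bd • ((f β * g ad) * (f α * g bd)) := by
    simp_rw [mul_mul_mul_swap_of_commute (hff α β) (hfg α _) (hfg β _)]
  simp_rw [mul_smul, ← Finset.smul_sum]
  exact (hω.smul_of_symm hsymm).sum_sum_eq_zero

/-- For a rank-one field `Π α α̇ = f α * g α̇` with commuting (bosonic) first factor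
`f`, the ε-square `∑ ε α β * ε α̇ β̇ • (Π α α̇ * Π β β̇)` vanishes, regardless of any
(anti)commutation properties among the `g`'s. -/
theorem bosonic_factor_nilpotency
    {A : Type*} [Ring A] (f g : Fin 2 → A)
    (hff : ∀ α β, f α * f β = f β * f α)
    (hfg : ∀ α γ, f α * g γ = g γ * f α) :
    ∑ α, ∑ β, ∑ ad, ∑ bd,
      (eps α β * eps ad bd) • ((f α * g ad) * (f β * g bd)) = 0 :=
  bosonic_factor_nilpotency_general isAlternating_eps eps f g hff hfg
end

section
/- Let λ : ℝ → (Fin 2 → ℂ) and x : ℝ → Matrix (Fin 2) (Fin 2) ℂ be differentiable, write λ̄ := star ∘ λ (componentwise conjugate, also differentiable), and define μ (τ) := Complex.I • (x τ *ᵥ λ τ) and μ̄ (τ) := Complex.I • ((x τ)ᵀ *ᵥ λ̄ τ). Then for every τ: λ̄ τ ⬝ᵥ (deriv μ τ) − μ̄ τ ⬝ᵥ (deriv λ τ) = Complex.I * (λ̄ τ ⬝ᵥ ((deriv x τ) *ᵥ λ τ)). Equivalently, the twistor Lagrangian λ̄ ∂_τ μ − μ̄ ∂_τ λ equals i times the Minkowski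 Lagrangian tr(p ∂_τ x) with p = vecMulVec (λ τ) (λ̄ τ). -/
open Matrix

section Derivative

variable {𝕜 R m n : Type*} [NontriviallyNormedField 𝕜] [NormedRing R] [NormedAlgebra 𝕜 R]
  [Fintype n] {v : 𝕜 → n → R} {v' : n → R} {t : 𝕜}

theorem hasDerivAt_dotProduct {u : 𝕜 → n → R} {u' : n → R}
    (hu : HasDerivAt u u' t) (hv : HasDerivAt v v' t) :
    HasDerivAt (fun s => u s ⬝ᵥ v s) (u' ⬝ᵥ v t + u t ⬝ᵥ v') t := by
  rw [hasDerivAt_pi] at hu hv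
  simpa only [dotProduct, Finset.sum_add_distrib] using
    HasDerivAt.fun_sum fun j (_ : j ∈ Finset.univ) => (hu j).fun_mul (hv j)

theorem hasDerivAt_mulVec_apply {A : 𝕜 → Matrix m n R} {A' : Matrix m n R} {i : m}
    (hA : HasDerivAt (fun s => A s i) (A' i) t) (hv : HasDerivAt v v' t) :
    HasDerivAt (fun s => (A s *ᵥ v s) i) ((A' *ᵥ v t + A t *ᵥ v') i) t :=
  hasDerivAt_dotProduct hA hv

end Derivative

theorem dotProduct_smul_mulVec {R m n : Type*} [CommSemiring R] [Fintype m] [Fintype n]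
    (c : R) (A : Matrix m n R) (u : m → R) (w : n → R) :
    u ⬝ᵥ (c • (A *ᵥ w)) = (c • (Aᵀ *ᵥ u)) ⬝ᵥ w := by
  rw [dotProduct_smul, smul_dotProduct, dotProduct_mulVec, mulVec_transpose]

theorem twistor_action_eq_minkowski_action_general
    {𝕜 R m n : Type*} [NontriviallyNormedField 𝕜] [NormedCommRing R] [NormedAlgebra 𝕜 R]
    [Fintype m] [Fintype n] (c : R) (u : m → R) (l : 𝕜 → n → R) (x : 𝕜 → Matrix m n R) (τ : 𝕜)
    (hl : ∀ j, DifferentiableAt 𝕜 (fun t => l t j) τ)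
    (hx : ∀ i j, DifferentiableAt 𝕜 (fun t => x t i j) τ) :
    u ⬝ᵥ (fun i => deriv (fun t => (c • (x t *ᵥ l t)) i) τ)
      - (c • ((x τ)ᵀ *ᵥ u)) ⬝ᵥ (fun j => deriv (fun t => l t j) τ)
      = c * (u ⬝ᵥ ((Matrix.of fun i j => deriv (fun t => x t i j) τ) *ᵥ l τ)) := by
  set l' : n → R := fun j => deriv (fun t => l t j) τ
  set x' : Matrix m n R := Matrix.of fun i j => deriv (fun t => x t i j) τ
  have hl' : HasDerivAt l l' τ := hasDerivAt_pi.2 fun j => (hl j).hasDerivAt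
  have hx' (i : m) : HasDerivAt (fun t => x t i) (x' i) τ :=
    hasDerivAt_pi.2 fun j => (hx i j).hasDerivAt
  have deriv_incidence : (fun i => deriv (fun t => (c • (x t *ᵥ l t)) i) τ)
      = c • (x' *ᵥ l τ + x τ *ᵥ l') :=
    funext fun i => ((hasDerivAt_mulVec_apply (hx' i) hl').const_mul c).deriv
  calc
    _ = u ⬝ᵥ (c • (x' *ᵥ l τ)) + u ⬝ᵥ (c • (x τ *ᵥ l')) - (c • ((x τ)ᵀ *ᵥ u)) ⬝ᵥ l' := by
      rw [deriv_incidence, smul_add, dotProduct_add]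
    _ = u ⬝ᵥ (c • (x' *ᵥ l τ)) := by
      rw [dotProduct_smul_mulVec c (x τ), add_sub_cancel_right]
    _ = c * (u ⬝ᵥ (x' *ᵥ l τ)) := by
      rw [dotProduct_smul, smul_eq_mul]

/-- Upon imposing the incidence relations `μ = i x λ`, `μ̄ = i xᵀ λ̄`, the twistor
Lagrangian `λ̄ ∂_τ μ − μ̄ ∂_τ λ` equals `i` times the Minkowski Lagrangian
`tr(p ∂_τ x)` with `p = λ λ̄` (derivatives taken componentwise). -/
theorem twistor_action_eq_minkowski_action
    (l : ℝ → Fin 2 → ℂ) (x : ℝ → Matrix (Fin 2) (Fin 2) ℂ)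
    (hl : ∀ i, Differentiable ℝ fun t => l t i)
    (hx : ∀ i j, Differentiable ℝ fun t => x t i j) (τ : ℝ) :
    (star ∘ l τ) ⬝ᵥ (fun i => deriv (fun t => (Complex.I • (x t *ᵥ l t)) i) τ)
      - (Complex.I • ((x τ)ᵀ *ᵥ (star ∘ l τ))) ⬝ᵥ (fun i => deriv (fun t => l t i) τ)
      = Complex.I *
        ((star ∘ l τ) ⬝ᵥ ((Matrix.of fun i j => deriv (fun t => x t i j) τ) *ᵥ l τ)) :=
  twistor_action_eq_minkowski_action_general Complex.I (star ∘ l τ) l x τ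
    (fun j => hl j τ) (fun i j => hx i j τ)
end

section
/- In the exterior algebra ExteriorAlgebra ℝ (Fin 4 → ℝ), let f α := ExteriorAlgebra.ι ℝ (Pi.single α 1) for α ∈ {0,1} and g α̇ := ExteriorAlgebra.ι ℝ (Pi.single (2 + α̇) 1) for α̇ ∈ {0,1} be images of distinct standard basis vectors, and define the doubly-fermionic rank-one field Π α α̇ := f α * g α̇. Then the ε-square ∑_{α,β,α̇,β̇} ε α β * ε α̇ β̇ • (Π α α̇ * Π β β̇) is NONZERO (it equals −4 • (f 0 * f 1 * g 0 * g 1)). Hence when both factors of Π = f g are fermionic, the nilpotency constraint Tr(Π²) = 0 fails. -/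
/-- The first pair of Grassmann generators `f 0, f 1` of `Λ(ℝ⁴)`. -/
noncomputable def f (α : Fin 2) : ExteriorAlgebra ℝ (Fin 4 → ℝ) :=
  ExteriorAlgebra.ι ℝ (Pi.single (Fin.castAdd 2 α) 1)

/-- The second pair of Grassmann generators `g 0, g 1` of `Λ(ℝ⁴)` (basis vectors
with indices `2 + α̇`). -/
noncomputable def g (αd : Fin 2) : ExteriorAlgebra ℝ (Fin 4 → ℝ) :=
  ExteriorAlgebra.ι ℝ (Pi.single (Fin.natAdd 2 αd) 1)

/-- The doubly-fermionic rank-one field `Π α α̇ = f α * g α̇`. -/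
noncomputable def PiField (α αd : Fin 2) : ExteriorAlgebra ℝ (Fin 4 → ℝ) :=
  f α * g αd

/-!
Fermionic `f` and `g` anticommute, so `Π Π = -(f f) (g g)` and the double contraction splits into
the product of the contractions `∑ ε (f f)` and `∑ ε (g g)`. Each contraction is the commutator of
the two components, which would vanish for a boson but is twice the product for a fermion. What
survives is the wedge product of four independent vectors, with coefficient `-(2 * 2)`.
-/

theorem sum_eps_smul {A : Type*} [AddCommGroup A] (F : Fin 2 → Fin 2 → A) :
    ∑ α, ∑ β, eps α β • F α β = F 0 1 - F 1 0 := by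
  simp [Fin.sum_univ_two, eps, sub_eq_add_neg]

/-- The ε-square of a 2×2 field `P`, i.e. both undotted and both dotted indices of `P P` are
contracted with `ε`. This is the quantity the paper writes as `Tr(P²)`. -/
def epsSquare {A : Type*} [NonUnitalRing A] (P : Fin 2 → Fin 2 → A) : A :=
  ∑ α, ∑ β, ∑ ad, ∑ bd, (eps α β * eps ad bd) • (P α ad * P β bd)

section Anticommuting

variable {A : Type*} [NonUnitalRing A] {x y : Fin 2 → A}

theorem epsSquare_mul_eq_neg_commutator_mul_commutator (hyx : ∀ i j, y i * x j = -(x j * y i)) :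
    epsSquare (fun α ad => x α * y ad) =
      -((x 0 * x 1 - x 1 * x 0) * (y 0 * y 1 - y 1 * y 0)) := by
  have mul_swap (α β ad bd : Fin 2) :
      x α * y ad * (x β * y bd) = -(x α * x β * (y ad * y bd)) := by
    rw [mul_assoc, ← mul_assoc (y ad), hyx]
    simp only [neg_mul, mul_neg, mul_assoc]
  calc epsSquare (fun α ad => x α * y ad)
      = -((∑ α, ∑ β, eps α β • (x α * x β)) * ∑ ad, ∑ bd, eps ad bd • (y ad * y bd)) := by
        simp_rw [epsSquare, mul_swap, Finset.sum_mul, Finset.mul_sum, smul_mul_smul_comm,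
          smul_neg, Finset.sum_neg_distrib]
    _ = _ := by rw [sum_eps_smul, sum_eps_smul]

theorem epsSquare_mul_eq_neg_four_zsmul (hyx : ∀ i j, y i * x j = -(x j * y i))
    (hx : x 1 * x 0 = -(x 0 * x 1)) (hy : y 1 * y 0 = -(y 0 * y 1)) :
    epsSquare (fun α ad => x α * y ad) = (-4 : ℤ) • (x 0 * x 1 * y 0 * y 1) := by
  calc epsSquare (fun α ad => x α * y ad)
      = -((x 0 * x 1 - x 1 * x 0) * (y 0 * y 1 - y 1 * y 0)) :=
        epsSquare_mul_eq_neg_commutator_mul_commutator hyx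
    _ = -(((2 : ℤ) • (x 0 * x 1)) * ((2 : ℤ) • (y 0 * y 1))) := by
        rw [hx, hy, sub_neg_eq_add, sub_neg_eq_add, two_zsmul, two_zsmul]
    _ = (-4 : ℤ) • (x 0 * x 1 * y 0 * y 1) := by
        rw [smul_mul_smul_comm, ← neg_smul, ← mul_assoc]
        norm_num

end Anticommuting

section CommRing

open ExteriorAlgebra (ι ιMulti)

variable {R M : Type*} [CommRing R] [AddCommGroup M] [Module R M]

theorem ι_mul_ι_swap (u v : M) : ι R u * ι R v = -(ι R v * ι R u) :=
  eq_neg_of_add_eq_zero_left (ExteriorAlgebra.ι_add_mul_swap u v)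

theorem epsSquare_ι_mul_ι (x y : Fin 2 → M) :
    epsSquare (fun α ad => ι R (x α) * ι R (y ad)) =
      (-4 : ℤ) • (ι R (x 0) * ι R (x 1) * ι R (y 0) * ι R (y 1)) :=
  epsSquare_mul_eq_neg_four_zsmul (fun _ _ => ι_mul_ι_swap _ _) (ι_mul_ι_swap _ _)
    (ι_mul_ι_swap _ _)

theorem ι_mul_ι_mul_ι_mul_ι_eq_ιMulti_append (x y : Fin 2 → M) :
    ι R (x 0) * ι R (x 1) * ι R (y 0) * ι R (y 1) = ιMulti R (2 + 2) (Fin.append x y) := by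
  rw [← ExteriorAlgebra.ιMulti_mul_ιMulti]
  simp [ExteriorAlgebra.ιMulti_apply, Matrix.vecTail, mul_assoc]

end CommRing

theorem linearIndependent_append_single_one (R : Type*) [Semiring R] (m n : ℕ) :
    LinearIndependent R (Fin.append (fun i => Pi.single (Fin.castAdd n i) 1)
      (fun j => Pi.single (Fin.natAdd m j) 1) : Fin (m + n) → Fin (m + n) → R) := by
  rw [Fin.append_castAdd_natAdd (f := fun i : Fin (m + n) => (Pi.single i 1 : Fin (m + n) → R))]
  exact Pi.linearIndependent_single_one (Fin (m + n)) R

section Field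

open ExteriorAlgebra (ι ιMulti)

variable {K E : Type*} [Field K] [AddCommGroup E] [Module K E]

theorem ιMulti_ne_zero_of_linearIndependent {n : ℕ} {v : Fin n → E}
    (hv : LinearIndependent K v) : ιMulti K n v ≠ 0 := by
  let s := Set.powersetCard.ofFinEmbEquiv (RelEmbedding.refl (· ≤ · : Fin n → Fin n → Prop))
  have family_ne_zero : exteriorPower.ιMulti_family K n v s ≠ 0 :=
    (exteriorPower.ιMulti_family_linearIndependent_field n hv).ne_zero s
  have family_eq : exteriorPower.ιMulti_family K n v s = exteriorPower.ιMulti K n v := by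
    rw [exteriorPower.ιMulti_family, Equiv.symm_apply_apply]
    rfl
  rw [family_eq] at family_ne_zero
  simpa using Subtype.coe_ne_coe.mpr family_ne_zero

theorem doubly_fermionic_eps_square_ne_zero_general (hK : (2 : K) ≠ 0)
    {x y : Fin 2 → E} (hxy : LinearIndependent K (Fin.append x y)) :
    epsSquare (fun α ad => ι K (x α) * ι K (y ad)) =
        (-4 : ℤ) • (ι K (x 0) * ι K (x 1) * ι K (y 0) * ι K (y 1)) ∧
      epsSquare (fun α ad => ι K (x α) * ι K (y ad)) ≠ 0 := by
  have neg_four_ne_zero : ((-4 : ℤ) : K) ≠ 0 := by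
    have : ((-4 : ℤ) : K) = -(2 * 2) := by norm_num
    simpa [this] using hK
  refine ⟨epsSquare_ι_mul_ι x y, ?_⟩
  rw [epsSquare_ι_mul_ι, ι_mul_ι_mul_ι_mul_ι_eq_ιMulti_append, ← Int.cast_smul_eq_zsmul K]
  exact smul_ne_zero neg_four_ne_zero (ιMulti_ne_zero_of_linearIndependent hxy)

end Field

/-- When both factors of `Π = f g` are fermionic, the ε-square of `Π` equals
`−4 • (f 0 * f 1 * g 0 * g 1)` and is NONZERO: the nilpotency constraint
`Tr(Π²) = 0` fails. -/
theorem doubly_fermionic_eps_square_ne_zero :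
    (∑ α, ∑ β, ∑ ad, ∑ bd,
      (eps α β * eps ad bd) • (PiField α ad * PiField β bd))
      = (-4 : ℤ) • (f 0 * f 1 * g 0 * g 1) ∧
    (∑ α, ∑ β, ∑ ad, ∑ bd,
      (eps α β * eps ad bd) • (PiField α ad * PiField β bd)) ≠ 0 :=
  doubly_fermionic_eps_square_ne_zero_general two_ne_zero
    (linearIndependent_append_single_one ℝ 2 2)
end
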